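/- arXiv:1011.3654 — 3 statements merged into one kernel-verified Lean document; each statement's English description precedes it below -/
import Mathlib

section
/- Suppose q ≠ 0 and d, d' ∈ ℕ^ℓ satisfy |d| ≠ |d'|. If a polynomial f ∈ K[X] satisfies D_{q,d} f = 0 and D_{q,d'} f = 0, then D_{q,d+d'} f = 0. -/
open MvPolynomial

/-- The operator `∂_j^d = ∂_{1j}^{d 1} ⋯ ∂_{ℓj}^{d ℓ}` on `K[X]`,
`X` an `ℓ × n` matrix of variables. -/
noncomputable def pdj {K : Type*} [Field K] {ℓ n : ℕ} (d : Fin ℓ → ℕ) (j : Fin n) :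
    Module.End K (MvPolynomial (Fin ℓ × Fin n) K) :=
  ((List.finRange ℓ).map fun i =>
    ((pderiv (i, j)).toLinearMap : Module.End K (MvPolynomial (Fin ℓ × Fin n) K)) ^ d i).prod

/-- The deformed operator
`D_{q,d} = ∑_j (1 + q (x_{1j}∂_{1j} + ⋯ + x_{ℓj}∂_{ℓj})) ∘ ∂_j^d` on `K[X]`. -/
noncomputable def Dq {K : Type*} [Field K] (ℓ n : ℕ) (q : K) (d : Fin ℓ → ℕ) :
    Module.End K (MvPolynomial (Fin ℓ × Fin n) K) :=
  ∑ j : Fin n,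
    (1 + q • ∑ i : Fin ℓ,
        (LinearMap.mulLeft K (X (i, j)) * (pderiv (i, j)).toLinearMap)) * pdj d j

/-!
The identity behind the theorem is `⁅D_{q,d}, D_{q,d'}⁆ = q (|d| - |d'|) D_{q,d+d'}`. Write
`D_{q,d} = ∑ⱼ Aⱼ Pⱼ` with `Aⱼ = 1 + q Eⱼ`, where `Eⱼ` is the Euler operator of the `j`-th column,
and `Pⱼ = ∂ⱼ^d`. The `Aⱼ` commute with one another and so do the differential monomials, while
`⁅Pⱼ, Aₖ⁆ = δⱼₖ q |d| Pⱼ` because `Pⱼ` lowers the degree in column `j` by `|d|`. Only the diagonal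
terms of the double sum for the commutator survive, and each contributes
`q (|d| - |d'|) Aⱼ ∂ⱼ^(d+d')`.
-/

section ListProd

variable {M ι κ : Type*} [Monoid M]

lemma commute_list_prod_map {f : ι → M} {g : κ → M} (h : ∀ i j, Commute (f i) (g j))
    (l : List ι) (l' : List κ) : Commute (l.map f).prod (l'.map g).prod :=
  Commute.list_prod_left _ _ <| List.forall_mem_map.2 fun i _ =>
    Commute.list_prod_right _ _ <| List.forall_mem_map.2 fun j _ => h i j

lemma list_prod_map_mul_of_commute {f g : ι → M} (h : ∀ i j, Commute (f i) (g j)) (l : List ι) :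
    (l.map fun i => f i * g i).prod = (l.map f).prod * (l.map g).prod := by
  induction l with
  | nil => simp
  | cons i l ih =>
    have hcomm : Commute (g i) (l.map f).prod := by
      simpa using (commute_list_prod_map h l [i]).symm
    simp only [List.map_cons, List.prod_cons, ih, hcomm.mul_mul_mul_comm]

end ListProd

section Commutator

variable {R A ι : Type*} [CommSemiring R] [Ring A] [Algebra R A] {e : A}

lemma mul_lie_eq_add_smul {x y : A} {r s : R} (hx : ⁅x, e⁆ = r • x) (hy : ⁅y, e⁆ = s • y) :
    ⁅x * y, e⁆ = (r + s) • (x * y) :=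
  calc ⁅x * y, e⁆ = ⁅x, e⁆ * y + x * ⁅y, e⁆ := by simp only [Ring.lie_def]; noncomm_ring
    _ = (r + s) • (x * y) := by rw [hx, hy, smul_mul_assoc, mul_smul_comm, add_smul]

lemma pow_lie_eq_smul {x : A} {r : R} (hx : ⁅x, e⁆ = r • x) (m : ℕ) :
    ⁅x ^ m, e⁆ = (m * r) • x ^ m := by
  induction m with
  | zero => simp [Ring.lie_def]
  | succ m ih => rw [pow_succ, mul_lie_eq_add_smul ih hx, Nat.cast_succ, add_one_mul]

lemma list_prod_map_lie_eq_smul {x : ι → A} {r : ι → R} (hx : ∀ i, ⁅x i, e⁆ = r i • x i)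
    (l : List ι) : ⁅(l.map x).prod, e⁆ = (l.map r).sum • (l.map x).prod := by
  induction l with
  | nil => simp [Ring.lie_def]
  | cons i l ih => simpa only [List.map_cons, List.prod_cons, List.sum_cons] using
      mul_lie_eq_add_smul (hx i) ih

lemma lie_one_add_smul {x : A} {r : R} (hx : ⁅x, e⁆ = r • x) (q : R) :
    ⁅x, 1 + q • e⁆ = (q * r) • x :=
  calc ⁅x, 1 + q • e⁆ = q • ⁅x, e⁆ := by
        simp only [Ring.lie_def, mul_add, add_mul, mul_one, one_mul, mul_smul_comm,
          smul_mul_assoc, smul_sub, add_sub_add_left_eq_sub]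
    _ = (q * r) • x := by rw [hx, mul_smul]

lemma mul_lie_mul_of_commute {a b x y : A} {r s : R} (hab : Commute a b) (hxy : Commute x y)
    (hxb : ⁅x, b⁆ = r • x) (hya : ⁅y, a⁆ = s • y) :
    ⁅a * x, b * y⁆ = (r • a - s • b) * (x * y) :=
  calc ⁅a * x, b * y⁆ = a * ⁅x, b⁆ * y - b * ⁅y, a⁆ * x + ⁅a, b⁆ * x * y + b * a * ⁅x, y⁆ := by
        simp only [Ring.lie_def]; noncomm_ring
    _ = (r • a - s • b) * (x * y) := by
        rw [hab.lie_eq, hxy.lie_eq, hxb, hya, zero_mul, zero_mul, mul_zero, add_zero, add_zero,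
          mul_smul_comm, mul_smul_comm, smul_mul_assoc, smul_mul_assoc, mul_assoc, mul_assoc,
          ← hxy.eq, sub_mul, smul_mul_assoc, smul_mul_assoc]

end Commutator

lemma sum_mul_lie_sum_mul {R A ι : Type*} [CommRing R] [Ring A] [Algebra R A] [Fintype ι]
    [DecidableEq ι] {a x y : ι → A} {r s : R}
    (ha : ∀ j k, Commute (a j) (a k)) (hxy : ∀ j k, Commute (x j) (y k))
    (hx : ∀ j k, ⁅x j, a k⁆ = (if j = k then r else 0) • x j)
    (hy : ∀ j k, ⁅y j, a k⁆ = (if j = k then s else 0) • y j) :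
    ⁅∑ j, a j * x j, ∑ k, a k * y k⁆ = (r - s) • ∑ j, a j * (x j * y j) :=
  calc ⁅∑ j, a j * x j, ∑ k, a k * y k⁆ = ∑ j, ∑ k, ⁅a j * x j, a k * y k⁆ := by
        simp only [Ring.lie_def, Finset.sum_sub_distrib, Finset.sum_mul_sum]
        rw [Finset.sum_comm (f := fun j k => a j * y j * (a k * x k))]
    _ = ∑ j, ∑ k, if j = k then (r - s) • (a j * (x j * y j)) else 0 := by
        refine Finset.sum_congr rfl fun j _ => Finset.sum_congr rfl fun k _ => ?_
        rw [mul_lie_mul_of_commute (ha j k) (hxy j k) (hx j k) (hy k j)]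
        obtain rfl | hjk := eq_or_ne j k
        · simp only [if_true, ← sub_smul, smul_mul_assoc]
        · simp only [hjk, hjk.symm, if_false, zero_smul, sub_zero, zero_mul]
    _ = (r - s) • ∑ j, a j * (x j * y j) := by
        simp only [Finset.sum_ite_eq, Finset.mem_univ, if_true, Finset.smul_sum]

lemma derivation_sum_apply {R A M ι : Type*} [CommSemiring R] [CommSemiring A] [AddCommMonoid M]
    [Algebra R A] [Module A M] [Module R M] (s : Finset ι) (D : ι → Derivation R A M) (a : A) :
    (∑ i ∈ s, D i) a = ∑ i ∈ s, D i a := by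
  rw [← Derivation.coeFnAddMonoidHom_apply, map_sum, Finset.sum_apply]
  rfl

lemma commute_toLinearMap_of_lie_eq_zero {R S : Type*} [CommRing R] [CommRing S] [Algebra R S]
    {D D' : Derivation R S S} (h : ⁅D, D'⁆ = 0) :
    Commute (D : Module.End R S) (D' : Module.End R S) := by
  rw [commute_iff_lie_eq, ← Derivation.commutator_coe_linear_map, h]
  rfl

section WeightedEuler

variable {R σ : Type*} [CommRing R]

lemma commute_pderiv (i j : σ) :
    Commute (pderiv (R := R) i).toLinearMap (pderiv (R := R) j).toLinearMap := by
  classical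
  refine commute_toLinearMap_of_lie_eq_zero (derivation_ext fun k => ?_)
  simp [Derivation.commutator_apply, Pi.single_apply, apply_ite]

/-- The Euler derivation `∑ i, w i • X i * ∂ i` with weights `w`, given by its values `w i • X i`
on the variables so that `σ` may be infinite. -/
noncomputable def weightedEuler (w : σ → R) :
    Derivation R (MvPolynomial σ R) (MvPolynomial σ R) :=
  mkDerivation R fun i => w i • X i

@[simp]
lemma weightedEuler_X (w : σ → R) (i : σ) : weightedEuler w (X i) = w i • X i :=
  mkDerivation_X _ _ _

lemma commute_weightedEuler (v w : σ → R) :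
    Commute (weightedEuler v).toLinearMap (weightedEuler w).toLinearMap := by
  refine commute_toLinearMap_of_lie_eq_zero (derivation_ext fun k => ?_)
  simp [Derivation.commutator_apply, smul_comm (v k)]

lemma lie_pderiv_weightedEuler (i : σ) (w : σ → R) :
    ⁅pderiv (R := R) i, weightedEuler w⁆ = w i • pderiv (R := R) i := by
  classical
  refine derivation_ext fun k => ?_
  obtain rfl | hki := eq_or_ne k i
  · simp [Derivation.commutator_apply]
  · simp [Derivation.commutator_apply, pderiv_X_of_ne hki]

end WeightedEuler

section Column

variable {R τ ι : Type*} [CommRing R] [DecidableEq ι]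

/-- The Euler derivation `∑ i, X (i, j) * ∂ (i, j)` of the `j`-th column. -/
noncomputable def columnEuler (R τ : Type*) [CommRing R] (j : ι) :
    Derivation R (MvPolynomial (τ × ι) R) (MvPolynomial (τ × ι) R) :=
  weightedEuler fun a => if a.2 = j then 1 else 0

lemma columnEuler_toLinearMap [Fintype τ] (j : ι) :
    (columnEuler R τ j).toLinearMap =
      ∑ i : τ, LinearMap.mulLeft R (X (i, j)) * (pderiv (i, j)).toLinearMap := by
  classical
  have hsum : columnEuler R τ j =
      ∑ i : τ, (X (i, j) : MvPolynomial (τ × ι) R) • pderiv (i, j) := by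
    refine derivation_ext fun ⟨i, k⟩ => ?_
    obtain rfl | hkj := eq_or_ne k j
    · simp [columnEuler, derivation_sum_apply, Pi.single_apply]
    · simp [columnEuler, derivation_sum_apply, hkj]
  refine LinearMap.ext fun f => ?_
  simp [hsum, derivation_sum_apply, LinearMap.sum_apply]

lemma lie_pderiv_columnEuler (i : τ) (j k : ι) :
    ⁅(pderiv (R := R) (i, j)).toLinearMap, (columnEuler R τ k).toLinearMap⁆ =
      (if j = k then 1 else 0 : R) • (pderiv (i, j)).toLinearMap := by
  rw [← Derivation.commutator_coe_linear_map, columnEuler, lie_pderiv_weightedEuler]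
  rfl

/-- The left factor `1 + q ∑ i, X (i, j) * ∂ (i, j)` of the `j`-th summand of `D_{q,d}`. -/
noncomputable def deformedEuler (τ : Type*) (q : R) (j : ι) :
    Module.End R (MvPolynomial (τ × ι) R) :=
  1 + q • (columnEuler R τ j).toLinearMap

lemma commute_deformedEuler (q : R) (j k : ι) :
    Commute (deformedEuler τ q j) (deformedEuler τ q k) := by
  have hEuler : Commute (columnEuler R τ j).toLinearMap (columnEuler R τ k).toLinearMap :=
    commute_weightedEuler _ _
  exact (Commute.one_left _).add_left
    ((Commute.one_right _).add_right ((hEuler.smul_left q).smul_right q))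

end Column

section DeformedOperator

variable {K : Type*} [Field K] {ℓ n : ℕ}

lemma commute_pdj (d d' : Fin ℓ → ℕ) (j k : Fin n) :
    Commute (pdj (K := K) d j) (pdj d' k) :=
  commute_list_prod_map (fun _ _ => (commute_pderiv _ _).pow_pow _ _) _ _

lemma pdj_add (d d' : Fin ℓ → ℕ) (j : Fin n) :
    pdj (K := K) (d + d') j = pdj d j * pdj d' j := by
  simp only [pdj, Pi.add_apply, pow_add]
  exact list_prod_map_mul_of_commute (fun _ _ => (commute_pderiv _ _).pow_pow _ _) _

lemma lie_pdj_columnEuler (d : Fin ℓ → ℕ) (j k : Fin n) :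
    ⁅pdj (K := K) d j, (columnEuler K (Fin ℓ) k).toLinearMap⁆ =
      (if j = k then ((∑ i, d i : ℕ) : K) else 0) • pdj d j := by
  have hsum : ((List.finRange ℓ).map fun i => (d i : K) * if j = k then 1 else 0).sum =
      if j = k then ((∑ i, d i : ℕ) : K) else 0 := by
    rw [← List.ofFn_eq_map, List.sum_ofFn]
    split_ifs <;> simp
  rw [pdj, list_prod_map_lie_eq_smul
    fun i => pow_lie_eq_smul (lie_pderiv_columnEuler i j k) (d i), hsum]

lemma lie_pdj_deformedEuler (q : K) (d : Fin ℓ → ℕ) (j k : Fin n) :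
    ⁅pdj (K := K) d j, deformedEuler (Fin ℓ) q k⁆ =
      (if j = k then q * ((∑ i, d i : ℕ) : K) else 0) • pdj d j := by
  rw [deformedEuler, lie_one_add_smul (lie_pdj_columnEuler d j k), mul_ite, mul_zero]

lemma Dq_eq_sum_deformedEuler_mul_pdj (q : K) (d : Fin ℓ → ℕ) :
    Dq ℓ n q d = ∑ j, deformedEuler (Fin ℓ) q j * pdj d j := by
  simp only [Dq, deformedEuler, columnEuler_toLinearMap]

theorem lie_Dq_Dq (q : K) (d d' : Fin ℓ → ℕ) :
    ⁅Dq ℓ n q d, Dq ℓ n q d'⁆ =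
      (q * (((∑ i, d i : ℕ) : K) - ((∑ i, d' i : ℕ) : K))) • Dq ℓ n q (d + d') := by
  simp only [Dq_eq_sum_deformedEuler_mul_pdj, pdj_add, mul_sub]
  exact sum_mul_lie_sum_mul (commute_deformedEuler q) (commute_pdj d d')
    (lie_pdj_deformedEuler q d) (lie_pdj_deformedEuler q d')

theorem deformed_operator_kernel_add_general (q : K) (hq : q ≠ 0) (d d' : Fin ℓ → ℕ)
    (hdd : ((∑ i, d i : ℕ) : K) ≠ ((∑ i, d' i : ℕ) : K)) (f : MvPolynomial (Fin ℓ × Fin n) K)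
    (hd : Dq ℓ n q d f = 0) (hd' : Dq ℓ n q d' f = 0) :
    Dq ℓ n q (d + d') f = 0 := by
  have hlie : ⁅Dq ℓ n q d, Dq ℓ n q d'⁆ f = 0 := by
    simp only [Ring.lie_def, LinearMap.sub_apply, Module.End.mul_apply, hd, hd', map_zero,
      sub_zero]
  rw [lie_Dq_Dq, LinearMap.smul_apply] at hlie
  exact (smul_eq_zero.mp hlie).resolve_left (mul_ne_zero hq (sub_ne_zero.mpr hdd))

end DeformedOperator

/-- If `|d| ≠ |d'|` and `q ≠ 0`, a common kernel element of `D_{q,d}` and `D_{q,d'}`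
is killed by `D_{q,d+d'}`. -/
theorem deformed_operator_kernel_add {K : Type*} [Field K] [CharZero K] {ℓ n : ℕ}
    (hℓ : 1 ≤ ℓ) (hn : 1 ≤ n) (q : K) (hq : q ≠ 0) (d d' : Fin ℓ → ℕ)
    (hdd : (∑ i, d i) ≠ ∑ i, d' i) (f : MvPolynomial (Fin ℓ × Fin n) K)
    (hd : Dq ℓ n q d f = 0) (hd' : Dq ℓ n q d' f = 0) :
    Dq ℓ n q (d + d') f = 0 :=
  deformed_operator_kernel_add_general q hq d d' (Nat.cast_injective.ne hdd) f hd hd'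
end

section
/- Let m ≥ 1 and let r ≥ 1 be a divisor of m. Let φ̄_r : K[x_1,…,x_n] → K[x_1,…,x_n] be the linear map sending each monomial x^a (a ∈ ℕ^n) to (a_1!⋯a_n!/((ra_1)!⋯(ra_n)!))·x^{ra}. If f ∈ K[x_1,…,x_n] satisfies D_{q,k} f = 0 for every integer k ≥ 1 (i.e., f is q-harmonic for the symmetric group S_n), then for every positive multiple k of m one has Σ_{j=1}^n (r + q·x_j∂_{x_j}) ∂_{x_j}^{k} (φ̄_r f) = 0; that is, φ̄_r f is (q/r)-harmonic for G(m,n). -/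
/-!
On divided powers the map `φ̄_r` is just `x^a / a! ↦ x^{ra} / (ra)!`, and `∂_j` lowers the `j`-th
exponent of `x^a / a!` by one without a coefficient. Hence `φ̄_r ∘ ∂_j = ∂_j^r ∘ φ̄_r`, while
`φ̄_r ∘ (r x_j ∂_j) = (x_j ∂_j) ∘ φ̄_r` since `x^a` is an eigenvector of `x_j ∂_j` with eigenvalue
`a_j`. Together these say that `φ̄_r ∘ (r D_{q,k}) = (∑_j (r + q x_j ∂_j) ∂_j^{rk}) ∘ φ̄_r`.
-/

open MvPolynomial

/-- The deformed operator `D_{q,k} = ∑_j (1 + q x_j ∂_j) ∘ ∂_j^k` on `K[x_1,…,x_n]`. -/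
noncomputable def Dq1 {K : Type*} [Field K] (n : ℕ) (q : K) (k : ℕ) :
    Module.End K (MvPolynomial (Fin n) K) :=
  ∑ j : Fin n,
    (1 + q • (LinearMap.mulLeft K (X j) * (pderiv j).toLinearMap)) *
      ((pderiv j).toLinearMap : Module.End K (MvPolynomial (Fin n) K)) ^ k

section

variable {σ R : Type*}

/-- The multi-index factorial `a! = ∏ i, (a i)!`. -/
def multiFactorial (a : σ →₀ ℕ) : ℕ :=
  a.prod fun _ d ↦ d.factorial

lemma multiFactorial_ne_zero (a : σ →₀ ℕ) : multiFactorial a ≠ 0 :=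
  Finset.prod_ne_zero_iff.2 fun i _ ↦ (a i).factorial_ne_zero

lemma multiFactorial_add_single (a : σ →₀ ℕ) (j : σ) :
    multiFactorial (a + Finsupp.single j 1) = (a j + 1) * multiFactorial a := by
  simp only [multiFactorial]
  rw [← Finsupp.mul_prod_erase' (a + Finsupp.single j 1) j _ fun _ ↦ Nat.factorial_zero,
    ← Finsupp.mul_prod_erase' a j _ fun _ ↦ Nat.factorial_zero, Finsupp.erase_add,
    Finsupp.erase_single, add_zero, Finsupp.add_apply, Finsupp.single_eq_same,
    Nat.factorial_succ, mul_assoc]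

variable [CommSemiring R]

/-- The partial derivative `∂_j` as an element of the ring of linear endomorphisms of `R[x]`,
where its powers are the iterated derivatives. -/
noncomputable abbrev pderivEnd (j : σ) : Module.End R (MvPolynomial σ R) :=
  (pderiv j).toLinearMap

/-- The Euler operator `x_j ∂_j`. -/
noncomputable abbrev eulerOperator (j : σ) : Module.End R (MvPolynomial σ R) :=
  LinearMap.mulLeft R (X j) * pderivEnd j

/-- The operator `∑_j (c + q x_j ∂_j) ∘ ∂_j^k`. A free constant term `c` lets `q / r` be replaced
by the pair `(r, q)`, without dividing. -/
noncomputable def deformedOperator [Fintype σ] (c q : R) (k : ℕ) :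
    Module.End R (MvPolynomial σ R) :=
  ∑ j, (c • 1 + q • eulerOperator j) * pderivEnd j ^ k

lemma deformedOperator_apply [Fintype σ] (c q : R) (k : ℕ) (f : MvPolynomial σ R) :
    deformedOperator c q k f =
      ∑ j, (c • (pderivEnd j ^ k) f + q • (X j * pderiv j ((pderivEnd j ^ k) f))) := by
  simp only [deformedOperator, LinearMap.sum_apply, Module.End.mul_apply, LinearMap.add_apply,
    LinearMap.smul_apply, Module.End.one_apply, LinearMap.mulLeft_apply, Derivation.coeFn_coe]

lemma Dq1_eq_deformedOperator {K : Type*} [Field K] (n : ℕ) (q : K) (k : ℕ) :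
    Dq1 n q k = deformedOperator 1 q k := by
  simp only [Dq1, deformedOperator, one_smul]

variable [Algebra ℚ≥0 R]

variable (R) in
/-- The divided power monomial `x^a / a!`. -/
noncomputable def dividedMonomial (a : σ →₀ ℕ) : MvPolynomial σ R :=
  monomial a (algebraMap ℚ≥0 R (multiFactorial a : ℚ≥0)⁻¹)

lemma monomial_one_eq_smul_dividedMonomial (a : σ →₀ ℕ) :
    monomial a (1 : R) = (multiFactorial a : R) • dividedMonomial R a := by
  have h : (multiFactorial a : ℚ≥0) ≠ 0 := Nat.cast_ne_zero.2 (multiFactorial_ne_zero a)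
  rw [dividedMonomial, smul_monomial, smul_eq_mul, ← map_natCast (algebraMap ℚ≥0 R), ← map_mul,
    mul_inv_cancel₀ h, (algebraMap ℚ≥0 R).map_one]

lemma linearMap_ext_dividedMonomial {M : Type*} [AddCommMonoid M] [Module R M]
    {φ ψ : MvPolynomial σ R →ₗ[R] M}
    (h : ∀ a, φ (dividedMonomial R a) = ψ (dividedMonomial R a)) : φ = ψ :=
  (basisMonomials σ R).ext fun a ↦ by
    simp only [coe_basisMonomials]
    rw [monomial_one_eq_smul_dividedMonomial, map_smul, map_smul, h]

lemma pderiv_dividedMonomial_of_eq_zero {a : σ →₀ ℕ} {j : σ} (ha : a j = 0) :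
    pderiv j (dividedMonomial R a) = 0 := by
  rw [dividedMonomial, pderiv_monomial, ha, Nat.cast_zero, mul_zero, monomial_zero]

lemma pderiv_dividedMonomial_add_single (a : σ →₀ ℕ) (j : σ) :
    pderiv j (dividedMonomial R (a + Finsupp.single j 1)) = dividedMonomial R a := by
  have h : (a j : ℚ≥0) + 1 ≠ 0 := by positivity
  rw [dividedMonomial, pderiv_monomial, add_tsub_cancel_right, dividedMonomial,
    multiFactorial_add_single, Finsupp.add_apply, Finsupp.single_eq_same,
    ← map_natCast (algebraMap ℚ≥0 R), ← map_mul]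
  congr 2
  push_cast
  field_simp

lemma pderivEnd_pow_dividedMonomial_add_single (a : σ →₀ ℕ) (j : σ) (k : ℕ) :
    (pderivEnd j ^ k) (dividedMonomial R (a + Finsupp.single j k)) = dividedMonomial R a := by
  induction k with
  | zero => rw [Finsupp.single_zero, add_zero, pow_zero, Module.End.one_apply]
  | succ k ih =>
    rw [Finsupp.single_add, ← add_assoc, pow_succ, Module.End.mul_apply, Derivation.coeFn_coe,
      pderiv_dividedMonomial_add_single, ih]

lemma eulerOperator_dividedMonomial (a : σ →₀ ℕ) (j : σ) :
    eulerOperator j (dividedMonomial R a) = (a j : R) • dividedMonomial R a := by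
  rw [Module.End.mul_apply, LinearMap.mulLeft_apply, Derivation.coeFn_coe, dividedMonomial,
    X_mul_pderiv_monomial, Nat.cast_smul_eq_nsmul]

/-- The inflation map `φ̄_r`, sending `x^a` to `a! / (ra)! • x^{ra}`. -/
noncomputable def inflation (r : ℕ) : Module.End R (MvPolynomial σ R) :=
  (basisMonomials σ R).constr R fun a ↦ (multiFactorial a : R) • dividedMonomial R (r • a)

lemma inflation_monomial_one (r : ℕ) (a : σ →₀ ℕ) :
    inflation r (monomial a (1 : R)) = (multiFactorial a : R) • dividedMonomial R (r • a) := by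
  simpa only [inflation, coe_basisMonomials] using (basisMonomials σ R).constr_basis R _ a

lemma inflation_dividedMonomial (r : ℕ) (a : σ →₀ ℕ) :
    inflation r (dividedMonomial R a) = dividedMonomial R (r • a) := by
  have h : (multiFactorial a : ℚ≥0) ≠ 0 := Nat.cast_ne_zero.2 (multiFactorial_ne_zero a)
  rw [dividedMonomial, ← mul_one (algebraMap ℚ≥0 R _), ← smul_eq_mul, ← smul_monomial, map_smul,
    inflation_monomial_one, smul_smul, ← map_natCast (algebraMap ℚ≥0 R), ← map_mul,
    inv_mul_cancel₀ h, map_one, one_smul]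

lemma eq_inflation {K : Type*} [Field K] [CharZero K] [Fintype σ] {r : ℕ}
    {φ : MvPolynomial σ K →ₗ[K] MvPolynomial σ K}
    (hφ : ∀ a : σ →₀ ℕ,
      φ (monomial a 1)
        = (((∏ j, (a j).factorial : ℕ) : K) / ((∏ j, (r * a j).factorial : ℕ) : K)) •
            monomial (r • a) 1) :
    φ = inflation r := by
  have multiFactorial_eq (a : σ →₀ ℕ) : multiFactorial a = ∏ j, (a j).factorial :=
    Finsupp.prod_fintype a _ fun _ ↦ Nat.factorial_zero
  refine (basisMonomials σ K).ext fun a ↦ ?_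
  rw [coe_basisMonomials, hφ, inflation_monomial_one, dividedMonomial, smul_monomial,
    smul_monomial, multiFactorial_eq, multiFactorial_eq, map_inv₀, map_natCast]
  simp only [Finsupp.smul_apply, smul_eq_mul, mul_one, div_eq_mul_inv]

lemma semiconjBy_inflation_pderivEnd {r : ℕ} (hr : r ≠ 0) (j : σ) :
    SemiconjBy (inflation r) (pderivEnd j : Module.End R (MvPolynomial σ R))
      (pderivEnd j ^ r) := by
  refine linearMap_ext_dividedMonomial fun a ↦ ?_
  simp only [Module.End.mul_apply, inflation_dividedMonomial, Derivation.coeFn_coe]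
  by_cases ha : a j = 0
  · have hra : (r • a) j = 0 := by rw [Finsupp.smul_apply, ha, smul_zero]
    obtain ⟨s, rfl⟩ := Nat.exists_eq_succ_of_ne_zero hr
    rw [pderiv_dividedMonomial_of_eq_zero ha, map_zero, pow_succ, Module.End.mul_apply,
      Derivation.coeFn_coe, pderiv_dividedMonomial_of_eq_zero hra, map_zero]
  · obtain ⟨b, rfl⟩ : ∃ b, a = b + Finsupp.single j 1 :=
      ⟨_, (tsub_add_cancel_of_le <| Finsupp.single_le_iff.2 <| Nat.one_le_iff_ne_zero.2 ha).symm⟩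
    rw [pderiv_dividedMonomial_add_single, inflation_dividedMonomial, smul_add,
      Finsupp.smul_single, smul_eq_mul, mul_one, pderivEnd_pow_dividedMonomial_add_single]

lemma semiconjBy_inflation_eulerOperator (r : ℕ) (j : σ) :
    SemiconjBy (inflation r : Module.End R (MvPolynomial σ R))
      ((r : R) • eulerOperator j) (eulerOperator j) := by
  refine linearMap_ext_dividedMonomial fun a ↦ ?_
  rw [Module.End.mul_apply, LinearMap.smul_apply, eulerOperator_dividedMonomial, smul_smul,
    map_smul, Module.End.mul_apply, inflation_dividedMonomial, eulerOperator_dividedMonomial,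
    Finsupp.smul_apply, smul_eq_mul, Nat.cast_mul]

lemma semiconjBy_inflation_deformedOperator [Fintype σ] {r : ℕ} (hr : r ≠ 0) (c q : R) (k : ℕ) :
    SemiconjBy (inflation r : Module.End R (MvPolynomial σ R))
      ((r : R) • deformedOperator c q k) (deformedOperator (r * c) q (r * k)) := by
  have summand (j : σ) : SemiconjBy (inflation r : Module.End R (MvPolynomial σ R))
      ((r : R) • ((c • 1 + q • eulerOperator j) * pderivEnd j ^ k))
      (((r * c) • 1 + q • eulerOperator j) * pderivEnd j ^ (r * k)) := by
    rw [← smul_mul_assoc, smul_add, smul_smul, smul_comm, pow_mul]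
    exact (((SemiconjBy.one_right _).smul_right _).add_right
      ((semiconjBy_inflation_eulerOperator r j).smul_right q)).mul_right
        ((semiconjBy_inflation_pderivEnd hr j).pow_right k)
  simp only [SemiconjBy, deformedOperator, Finset.smul_sum, Finset.mul_sum, Finset.sum_mul]
  exact Finset.sum_congr rfl fun j _ ↦ (summand j).eq

theorem inflate_qHarmonic_general [Fintype σ] {r : ℕ} (hr : r ≠ 0) {c q : R} {k : ℕ}
    {f : MvPolynomial σ R} (hf : deformedOperator c q k f = 0) :
    deformedOperator (r * c) q (r * k) (inflation r f) = 0 := by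
  have h := LinearMap.congr_fun (semiconjBy_inflation_deformedOperator hr c q k).eq f
  rw [Module.End.mul_apply, LinearMap.smul_apply, hf, smul_zero, map_zero] at h
  exact h.symm

end

/-- Inflating a `q`-harmonic polynomial for `S_n` by `φ̄_r` (with `r ∣ m`) yields a
`(q/r)`-harmonic polynomial for `G(m,n)`:
`∑_j (r + q x_j∂_j) ∂_j^k (φ̄_r f) = 0` for every positive multiple `k` of `m`. -/
theorem inflate_qHarmonic {K : Type*} [Field K] [CharZero K] {n : ℕ} (hn : 1 ≤ n)
    (q : K) (m r : ℕ) (hm : 1 ≤ m) (hr : 1 ≤ r) (hrm : r ∣ m)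
    (φ : MvPolynomial (Fin n) K →ₗ[K] MvPolynomial (Fin n) K)
    (hφ : ∀ a : Fin n →₀ ℕ,
      φ (monomial a 1)
        = (((∏ j, (a j).factorial : ℕ) : K) / ((∏ j, (r * a j).factorial : ℕ) : K)) •
            monomial (r • a) 1)
    (f : MvPolynomial (Fin n) K) (hf : ∀ k : ℕ, 1 ≤ k → Dq1 n q k f = 0) :
    ∀ k : ℕ, (∃ t : ℕ, 0 < t ∧ k = m * t) →
      ∑ j : Fin n,
          ((r : K) • ((((pderiv j).toLinearMap :
                Module.End K (MvPolynomial (Fin n) K)) ^ k) (φ f))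
            + q • (X j * pderiv j ((((pderiv j).toLinearMap :
                Module.End K (MvPolynomial (Fin n) K)) ^ k) (φ f)))) = 0 := by
  rintro _ ⟨t, ht, rfl⟩
  obtain ⟨s, rfl⟩ := hrm
  have hst : 1 ≤ s * t := Nat.mul_pos (Nat.pos_of_mul_pos_left hm) ht
  have hD : deformedOperator 1 q (s * t) f = 0 := Dq1_eq_deformedOperator n q _ ▸ hf _ hst
  rw [← deformedOperator_apply, eq_inflation hφ, mul_assoc, ← mul_one (r : K)]
  exact inflate_qHarmonic_general (Nat.one_le_iff_ne_zero.1 hr) hD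
end

section
/- Let m ≥ 1 and let b be an integer with 1 ≤ b < m, and suppose q = −1/b. Then the 2m+2 polynomials {1, x, x^2, …, x^{m−1}, x^m − y^m, y, y^2, …, y^{m−1}} ∪ {x^{m+b}, y^{m+b}} form a K-basis of the space H_q(G(m,m,2)) := {f ∈ K[x,y] : D_{q,m} f = 0, D_{q,2m} f = 0, ∂_x∂_y f = 0} of q-harmonic polynomials for the dihedral group G(m,m,2). -/
open MvPolynomial

/-- The deformed operator `D_{q,k} = (1 + q x∂_x)∂_x^k + (1 + q y∂_y)∂_y^k` on `K[x,y]`,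
with `x = X 0` and `y = X 1`. -/
noncomputable def D2 {K : Type*} [Field K] (q : K) (k : ℕ) :
    Module.End K (MvPolynomial (Fin 2) K) :=
  (1 + q • (LinearMap.mulLeft K (X 0) * (pderiv 0).toLinearMap)) *
      ((pderiv (0 : Fin 2)).toLinearMap : Module.End K (MvPolynomial (Fin 2) K)) ^ k
    + (1 + q • (LinearMap.mulLeft K (X 1) * (pderiv 1).toLinearMap)) *
        ((pderiv (1 : Fin 2)).toLinearMap : Module.End K (MvPolynomial (Fin 2) K)) ^ k

/-- The deformed Pochhammer symbol `⟨d⟩_k = d(d-1)⋯(d-k+1)(1 + q(d-k))`. -/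
noncomputable def tp {K : Type*} [Field K] (q : K) (d k : ℕ) : K :=
  (∏ i ∈ Finset.range k, ((d : K) - (i : K))) * (1 + q * ((d : K) - (k : K)))

/-!
A polynomial with `∂_x∂_y f = 0` involves only the monomials `x^d` and `y^d`, and `D_{q,m}` sends
`x^d` to `⟨d⟩_m x^{d-m}` and `y^d` to `⟨d⟩_m y^{d-m}`. The only two of these with proportional
nonzero images are `x^m` and `y^m`, so for such an `f` the equation `D_{q,m} f = 0` says that the
coefficients of `x^m` and `y^m` are opposite and that those of `x^d` and `y^d` vanish whenever
`d > m` and `⟨d⟩_m ≠ 0`. For `q = -1/b` the symbol `⟨d⟩_m` vanishes exactly when `d < m` or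
`d = m + b`, whence the two additional generators; they survive `D_{q,2m}` because `m + b < 2m`.
Linear independence and spanning both follow because the coefficients at `2m + 2` suitable pure
powers are dual to the family and separate the points of `H_q(G(m,m,2))`.
-/

section Dual

variable {R M ι : Type*} [Ring R] [AddCommGroup M] [Module R M] [Finite ι]

theorem span_range_eq_of_dual {N : Submodule R M} {v : ι → M} {φ : ι → M →ₗ[R] R}
    (hv : ∀ i, v i ∈ N) (hne : Pairwise fun i j ↦ φ i (v j) = 0) (hself : ∀ i, φ i (v i) = 1)
    (htotal : ∀ x ∈ N, (∀ i, φ i x = 0) → x = 0) :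
    Submodule.span R (Set.range v) = N := by
  have := Fintype.ofFinite ι
  refine le_antisymm (Submodule.span_le.2 (Set.range_subset_iff.2 hv)) fun x hx ↦ ?_
  have hexpand : x - ∑ j, φ j x • v j = 0 := by
    refine htotal _ (N.sub_mem hx (N.sum_mem fun j _ ↦ N.smul_mem _ (hv j))) fun i ↦ ?_
    rw [map_sub, map_sum, Finset.sum_eq_single i (fun j _ hj ↦ by simp [hne hj.symm]) (by simp)]
    simp [hself]
  rw [sub_eq_zero.1 hexpand]
  exact Submodule.sum_mem _ fun j _ ↦
    Submodule.smul_mem _ _ (Submodule.subset_span (Set.mem_range_self j))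

end Dual

section PartialDerivatives

variable {R σ : Type*} [CommSemiring R]

theorem coeff_pderiv_pow (i : σ) (k : ℕ) (f : MvPolynomial σ R) (n : σ →₀ ℕ) :
    coeff n ((((pderiv i).toLinearMap : Module.End R (MvPolynomial σ R)) ^ k) f) =
      (n i + k).descFactorial k * coeff (n + Finsupp.single i k) f := by
  induction k generalizing f with
  | zero => simp
  | succ k ih =>
    rw [pow_succ, Module.End.mul_apply, ih, Derivation.coeFn_coe, coeff_pderiv, add_assoc,
      ← Finsupp.single_add, ← add_assoc (n i), Nat.succ_descFactorial_succ, Finsupp.add_apply,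
      Finsupp.single_eq_same]
    push_cast
    ring

theorem coeff_X_mul_pderiv (i : σ) (f : MvPolynomial σ R) (n : σ →₀ ℕ) :
    coeff n (X i * pderiv i f) = n i * coeff n f := by
  classical
  induction f using MvPolynomial.induction_on' with
  | monomial s a =>
    rw [X_mul_pderiv_monomial, coeff_smul, coeff_monomial]
    split_ifs with h <;> simp [h]
  | add f g hf hg => rw [map_add, mul_add, coeff_add, coeff_add, hf, hg, mul_add]

theorem pderiv_pderiv_eq_zero_iff [CharZero R] [NoZeroDivisors R] {i j : σ} (hij : i ≠ j)
    {f : MvPolynomial σ R} :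
    pderiv i (pderiv j f) = 0 ↔ ∀ n : σ →₀ ℕ, n i ≠ 0 → n j ≠ 0 → coeff n f = 0 := by
  have hcoeff (n : σ →₀ ℕ) : coeff n (pderiv i (pderiv j f)) = 0 ↔
      coeff (n + Finsupp.single i 1 + Finsupp.single j 1) f = 0 := by
    simp [coeff_pderiv, Nat.cast_add_one_ne_zero, Finsupp.single_eq_of_ne' hij]
  refine ⟨fun h n hi hj ↦ ?_, fun h ↦ ?_⟩
  · have hn : n - Finsupp.single j 1 - Finsupp.single i 1 + Finsupp.single i 1 +
        Finsupp.single j 1 = n := by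
      rw [Finsupp.sub_add_single_one_cancel (by simpa [Finsupp.single_eq_of_ne hij] using hi),
        Finsupp.sub_add_single_one_cancel hj]
    rw [← hn, ← hcoeff, h, coeff_zero]
  · ext n
    exact (hcoeff n).2 (h _ (by simp) (by simp))

theorem pderiv_pderiv_X_pow {i j : σ} (hij : i ≠ j) (l : σ) (d : ℕ) :
    pderiv i (pderiv j (X l ^ d : MvPolynomial σ R)) = 0 := by
  rcases eq_or_ne l j with rfl | hlj
  · simp [pderiv_X_of_ne hij.symm]
  · simp [pderiv_X_of_ne hlj]

end PartialDerivatives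

section DeformedPochhammer

variable {K : Type*} [Field K]

theorem tp_eq_descFactorial_mul (q : K) (d k : ℕ) :
    tp q d k = d.descFactorial k * (1 + q * ((d : K) - k)) := by
  rw [tp, ← descPochhammer_eval_eq_prod_range, descPochhammer_eval_eq_descFactorial]

theorem tp_eq_zero_of_lt (q : K) {d k : ℕ} (h : d < k) : tp q d k = 0 := by
  rw [tp_eq_descFactorial_mul, Nat.descFactorial_of_lt h, Nat.cast_zero, zero_mul]

theorem tp_eq_zero_iff [CharZero K] {q : K} {d k : ℕ} :
    tp q d k = 0 ↔ d < k ∨ 1 + q * ((d : K) - k) = 0 := by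
  rw [tp_eq_descFactorial_mul, mul_eq_zero, Nat.cast_eq_zero, Nat.descFactorial_eq_zero_iff_lt]

theorem tp_self_ne_zero [CharZero K] (q : K) (k : ℕ) : tp q k k ≠ 0 := by
  simp [tp_eq_zero_iff]

theorem tp_neg_one_div_eq_zero_iff [CharZero K] {b d k : ℕ} (hb : b ≠ 0) :
    tp (-1 / b : K) d k = 0 ↔ d < k ∨ d = k + b := by
  have hb' : (b : K) ≠ 0 := Nat.cast_ne_zero.2 hb
  have hfactor : 1 + -1 / (b : K) * (d - k) = 0 ↔ (d : K) = (k + b : ℕ) := by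
    field_simp
    push_cast
    grind
  rw [tp_eq_zero_iff, hfactor, Nat.cast_inj]

end DeformedPochhammer

section QPderiv

variable {K σ : Type*} [Field K]

/-- The summand `(1 + q x_i∂_i)∂_i^k` of the deformed operator `D_{q,k}`, for an arbitrary family of
variables. -/
noncomputable def qPderiv (q : K) (i : σ) (k : ℕ) : Module.End K (MvPolynomial σ K) :=
  (1 + q • (LinearMap.mulLeft K (X i) * (pderiv i).toLinearMap)) * (pderiv i).toLinearMap ^ k

theorem coeff_qPderiv (q : K) (i : σ) (k : ℕ) (f : MvPolynomial σ K) (n : σ →₀ ℕ) :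
    coeff n (qPderiv q i k f) = tp q (n i + k) k * coeff (n + Finsupp.single i k) f := by
  have heuler (g : MvPolynomial σ K) :
      coeff n ((1 + q • (LinearMap.mulLeft K (X i) * (pderiv i).toLinearMap) :
        Module.End K (MvPolynomial σ K)) g) = (1 + q * n i) * coeff n g := by
    change coeff n (g + q • (X i * pderiv i g)) = _
    rw [coeff_add, coeff_smul, coeff_X_mul_pderiv, smul_eq_mul]
    ring
  rw [qPderiv, Module.End.mul_apply, heuler, coeff_pderiv_pow, tp_eq_descFactorial_mul]
  push_cast
  ring

theorem qPderiv_X_pow_self (q : K) (i : σ) (k d : ℕ) :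
    qPderiv q i k (X i ^ d) = tp q d k • X i ^ (d - k) := by
  classical
  ext n
  rw [coeff_qPderiv, coeff_smul, smul_eq_mul, coeff_X_pow, coeff_X_pow]
  rcases lt_or_ge d k with hdk | hkd
  · have hne : Finsupp.single i d ≠ n + Finsupp.single i k := fun h ↦ by
      have hi : d = n i + k := by simpa using DFunLike.congr_fun h i
      omega
    rw [if_neg hne, tp_eq_zero_of_lt q hdk, mul_zero, zero_mul]
  · obtain ⟨c, rfl⟩ := Nat.exists_eq_add_of_le' hkd
    simp only [Finsupp.single_add, add_left_inj, Nat.add_sub_cancel]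
    split_ifs with h
    · rw [← h, Finsupp.single_eq_same]
    · rw [mul_zero, mul_zero]

theorem qPderiv_X_pow_of_ne (q : K) {i j : σ} (hij : i ≠ j) {k : ℕ} (hk : k ≠ 0) (d : ℕ) :
    qPderiv q i k (X j ^ d) = 0 := by
  classical
  ext n
  rw [coeff_qPderiv, coeff_X_pow, if_neg, mul_zero, coeff_zero]
  intro h
  have hi : 0 = n i + k := by simpa [Finsupp.single_eq_of_ne hij] using DFunLike.congr_fun h i
  omega

end QPderiv

theorem exists_eq_single_of_apply_eq_zero {M : Type*} [Zero M] {n : Fin 2 →₀ M} {i : Fin 2}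
    (hi : n i = 0) : ∃ j d, n = Finsupp.single j d := by
  refine ⟨1 - i, n (1 - i), ?_⟩
  ext l
  obtain rfl | rfl : l = i ∨ l = 1 - i := by omega
  · rw [hi, Finsupp.single_eq_of_ne (by omega)]
  · rw [Finsupp.single_eq_same]

section QHarmonic

variable {K : Type*} [Field K] {q : K} {m : ℕ}

theorem D2_eq_sum_qPderiv (q : K) (k : ℕ) : D2 q k = ∑ i, qPderiv q i k := by
  rw [Fin.sum_univ_two]
  rfl

theorem coeff_D2 (q : K) (k : ℕ) (f : MvPolynomial (Fin 2) K) (n : Fin 2 →₀ ℕ) :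
    coeff n (D2 q k f) = ∑ i, tp q (n i + k) k * coeff (n + Finsupp.single i k) f := by
  simp [D2_eq_sum_qPderiv, coeff_qPderiv]

theorem D2_X_pow (q : K) {k : ℕ} (hk : k ≠ 0) (i : Fin 2) (d : ℕ) :
    D2 q k (X i ^ d) = tp q d k • X i ^ (d - k) := by
  rw [D2_eq_sum_qPderiv, LinearMap.sum_apply, Finset.sum_eq_single i
    (fun j _ hj ↦ qPderiv_X_pow_of_ne q hj hk d) (by simp), qPderiv_X_pow_self]

/-- The space `H_q(G(m,m,2))` of `q`-harmonic polynomials for the dihedral group `G(m,m,2)`. -/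
noncomputable def qHarmonic (q : K) (m : ℕ) : Submodule K (MvPolynomial (Fin 2) K) :=
  LinearMap.ker (D2 q m) ⊓ LinearMap.ker (D2 q (2 * m)) ⊓
    LinearMap.ker ((pderiv 0).toLinearMap * (pderiv 1).toLinearMap :
      Module.End K (MvPolynomial (Fin 2) K))

theorem mem_qHarmonic {f : MvPolynomial (Fin 2) K} :
    f ∈ qHarmonic q m ↔ (D2 q m f = 0 ∧ D2 q (2 * m) f = 0) ∧ pderiv 0 (pderiv 1 f) = 0 :=
  Iff.rfl

theorem X_pow_mem_qHarmonic (hm : m ≠ 0) {d : ℕ} (hd : tp q d m = 0) (hdm : d < 2 * m)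
    (i : Fin 2) : X i ^ d ∈ qHarmonic q m := by
  refine mem_qHarmonic.2 ⟨⟨?_, ?_⟩, pderiv_pderiv_X_pow zero_ne_one i d⟩
  · rw [D2_X_pow q hm, hd, zero_smul]
  · rw [D2_X_pow q (by omega), tp_eq_zero_of_lt q hdm, zero_smul]

theorem X_pow_sub_X_pow_mem_qHarmonic (q : K) (hm : m ≠ 0) :
    (X 0 ^ m - X 1 ^ m : MvPolynomial (Fin 2) K) ∈ qHarmonic q m := by
  refine mem_qHarmonic.2 ⟨⟨?_, ?_⟩, ?_⟩
  · simp [D2_X_pow q hm]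
  · simp [D2_X_pow q (show 2 * m ≠ 0 by omega), tp_eq_zero_of_lt q (show m < 2 * m by omega)]
  · rw [map_sub, map_sub, pderiv_pderiv_X_pow zero_ne_one, pderiv_pderiv_X_pow zero_ne_one,
      sub_zero]

section Coefficients

variable [CharZero K] {f : MvPolynomial (Fin 2) K}

theorem coeff_eq_zero_of_mem_qHarmonic (hf : f ∈ qHarmonic q m) {n : Fin 2 →₀ ℕ}
    (hn : ∀ i, n i ≠ 0) : coeff n f = 0 :=
  (pderiv_pderiv_eq_zero_iff zero_ne_one).1 (mem_qHarmonic.1 hf).2 n (hn 0) (hn 1)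

theorem coeff_single_eq_zero_of_mem_qHarmonic (hf : f ∈ qHarmonic q m) (hm : m ≠ 0) {d : ℕ}
    (hmd : m < d) (hd : tp q d m ≠ 0) (i : Fin 2) : coeff (Finsupp.single i d) f = 0 := by
  have hcoeff : ∑ j, tp q (Finsupp.single i (d - m) j + m) m *
      coeff (Finsupp.single i (d - m) + Finsupp.single j m) f = 0 := by
    rw [← coeff_D2, (mem_qHarmonic.1 hf).1.1, coeff_zero]
  have hmixed (j : Fin 2) (hj : j ≠ i) :
      coeff (Finsupp.single i (d - m) + Finsupp.single j m) f = 0 := by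
    refine coeff_eq_zero_of_mem_qHarmonic hf fun l ↦ ?_
    obtain rfl | rfl : l = i ∨ l = j := by omega
    · rw [Finsupp.add_apply, Finsupp.single_eq_same]
      omega
    · rw [Finsupp.add_apply, Finsupp.single_eq_same]
      omega
  rw [Finset.sum_eq_single i (fun j _ hj ↦ by rw [hmixed j hj, mul_zero]) (by simp),
    Finsupp.single_eq_same, ← Finsupp.single_add, Nat.sub_add_cancel hmd.le] at hcoeff
  exact (mul_eq_zero.1 hcoeff).resolve_left hd

theorem sum_coeff_single_of_mem_qHarmonic (hf : f ∈ qHarmonic q m) :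
    ∑ i, coeff (Finsupp.single i m) f = 0 := by
  have hcoeff := coeff_D2 q m f 0
  simp only [(mem_qHarmonic.1 hf).1.1, coeff_zero, Finsupp.zero_apply, zero_add,
    ← Finset.mul_sum] at hcoeff
  exact (mul_eq_zero.1 hcoeff.symm).resolve_left (tp_self_ne_zero q m)

end Coefficients

end QHarmonic

section SingularBasis

variable {K : Type*} [Field K] {m b : ℕ}

variable (K) in
/-- The basis of `H_q(G(m,m,2))` for `q = -1/b`, in the order
`1, x, …, x^{m-1}, x^m - y^m, y^{m-1}, …, y, x^{m+b}, y^{m+b}`. -/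
noncomputable def singularHarmonic (m b : ℕ) (i : Fin (2 * m + 2)) :
    MvPolynomial (Fin 2) K :=
  if (i : ℕ) < m then X 0 ^ (i : ℕ)
  else if (i : ℕ) = m then X 0 ^ m - X 1 ^ m
  else if (i : ℕ) < 2 * m then X 1 ^ (2 * m - (i : ℕ))
  else if (i : ℕ) = 2 * m then X 0 ^ (m + b)
  else X 1 ^ (m + b)

/-- The exponent at which `singularHarmonic K m b i` has coefficient `1` and the other members of
the family have coefficient `0`; for `x^m - y^m` this is the exponent of `x^m`. -/
noncomputable def dualExponent (m b : ℕ) (i : Fin (2 * m + 2)) : Fin 2 →₀ ℕ :=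
  if (i : ℕ) ≤ m then Finsupp.single 0 (i : ℕ)
  else if (i : ℕ) < 2 * m then Finsupp.single 1 (2 * m - (i : ℕ))
  else if (i : ℕ) = 2 * m then Finsupp.single 0 (m + b)
  else Finsupp.single 1 (m + b)

theorem singularHarmonic_eq_monomial_sub (m b : ℕ) (i : Fin (2 * m + 2)) :
    singularHarmonic K m b i = monomial (dualExponent m b i) 1 -
      if (i : ℕ) = m then monomial (Finsupp.single 1 m) 1 else 0 := by
  grind [singularHarmonic, dualExponent, X_pow_eq_monomial]

theorem dualExponent_injective (hb : b ≠ 0) (hm : m ≠ 0) :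
    Function.Injective (dualExponent m b) := by
  intro i j hij
  grind [dualExponent, Finsupp.single_eq_single_iff]

theorem dualExponent_ne_single_one (hb : b ≠ 0) (hm : m ≠ 0) (i : Fin (2 * m + 2)) :
    dualExponent m b i ≠ Finsupp.single 1 m := by
  grind [dualExponent, Finsupp.single_eq_single_iff]

theorem coeff_dualExponent_singularHarmonic (hb : b ≠ 0) (hm : m ≠ 0) (i j : Fin (2 * m + 2)) :
    coeff (dualExponent m b i) (singularHarmonic K m b j) = if j = i then 1 else 0 := by
  classical
  have hcorrection : coeff (dualExponent m b i)
      (if (j : ℕ) = m then monomial (Finsupp.single 1 m) (1 : K) else 0) = 0 := by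
    split_ifs
    · rw [coeff_monomial, if_neg (dualExponent_ne_single_one hb hm i).symm]
    · rw [coeff_zero]
  rw [singularHarmonic_eq_monomial_sub, coeff_sub, hcorrection, sub_zero, coeff_monomial]
  simp only [(dualExponent_injective hb hm).eq_iff]

theorem single_mem_range_dualExponent (hm : m ≠ 0) {d : ℕ} (i : Fin 2) (hd : d < m ∨ d = m + b) :
    Finsupp.single i d ∈ Set.range (dualExponent m b) := by
  fin_cases i <;> rcases hd with hd | rfl
  · exact ⟨⟨d, by omega⟩, if_pos hd.le⟩
  · exact ⟨⟨2 * m, by omega⟩, by grind [dualExponent]⟩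
  · rcases Nat.eq_zero_or_pos d with rfl | hd0
    · exact ⟨0, by simp [dualExponent]⟩
    · exact ⟨⟨2 * m - d, by omega⟩, by grind [dualExponent]⟩
  · exact ⟨⟨2 * m + 1, by omega⟩, by grind [dualExponent]⟩

theorem single_zero_mem_range_dualExponent (m b : ℕ) :
    Finsupp.single 0 m ∈ Set.range (dualExponent m b) :=
  ⟨⟨m, by omega⟩, if_pos le_rfl⟩

theorem singularHarmonic_mem_qHarmonic [CharZero K] (hb : b ≠ 0) (hbm : b < m)
    (i : Fin (2 * m + 2)) : singularHarmonic K m b i ∈ qHarmonic (-1 / b : K) m := by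
  have hm : m ≠ 0 := by omega
  have hpow (j : Fin 2) (d : ℕ) (hd : d < m ∨ d = m + b) :
      (X j ^ d : MvPolynomial (Fin 2) K) ∈ qHarmonic (-1 / b : K) m :=
    X_pow_mem_qHarmonic hm ((tp_neg_one_div_eq_zero_iff hb).2 hd) (by omega) j
  rw [singularHarmonic]
  split_ifs
  · exact hpow _ _ (by omega)
  · exact X_pow_sub_X_pow_mem_qHarmonic _ hm
  · exact hpow _ _ (by omega)
  · exact hpow _ _ (by omega)
  · exact hpow _ _ (by omega)

theorem eq_zero_of_coeff_dualExponent_eq_zero [CharZero K] (hb : b ≠ 0) (hm : m ≠ 0)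
    {f : MvPolynomial (Fin 2) K} (hf : f ∈ qHarmonic (-1 / b : K) m)
    (hcoeff : ∀ i, coeff (dualExponent m b i) f = 0) : f = 0 := by
  have hrange : ∀ n ∈ Set.range (dualExponent m b), coeff n f = 0 := Set.forall_mem_range.2 hcoeff
  have hx : coeff (Finsupp.single 0 m) f = 0 := hrange _ (single_zero_mem_range_dualExponent m b)
  have hy : coeff (Finsupp.single 1 m) f = 0 := by
    simpa [hx] using sum_coeff_single_of_mem_qHarmonic hf
  ext n
  rw [coeff_zero]
  by_cases hn : ∀ i, n i ≠ 0
  · exact coeff_eq_zero_of_mem_qHarmonic hf hn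
  push Not at hn
  obtain ⟨i₀, hi₀⟩ := hn
  obtain ⟨i, d, rfl⟩ := exists_eq_single_of_apply_eq_zero hi₀
  by_cases hd : d < m ∨ d = m + b
  · exact hrange _ (single_mem_range_dualExponent hm i hd)
  obtain rfl | hmd : d = m ∨ m < d := by omega
  · fin_cases i
    exacts [hx, hy]
  · exact coeff_single_eq_zero_of_mem_qHarmonic hf hm hmd
      (mt (tp_neg_one_div_eq_zero_iff hb).1 hd) i

end SingularBasis

/-- For the singular value `q = -1/b` with `1 ≤ b < m`, the `2m+2` polynomials
`1, x, …, x^{m-1}, x^m - y^m, y^{m-1}, …, y, x^{m+b}, y^{m+b}` form a basis of the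
`q`-harmonic polynomials for the dihedral group `G(m,m,2)`. -/
theorem basis_qHarmonic_dihedral_singular {K : Type*} [Field K] [CharZero K] (q : K)
    (m b : ℕ) (hb : 1 ≤ b) (hbm : b < m) (hq : q = -(1 : K) / (b : K)) :
    LinearIndependent K (fun i : Fin (2 * m + 2) =>
      if (i : ℕ) < m then (X 0 : MvPolynomial (Fin 2) K) ^ (i : ℕ)
      else if (i : ℕ) = m then (X 0 : MvPolynomial (Fin 2) K) ^ m - X 1 ^ m
      else if (i : ℕ) < 2 * m then (X 1 : MvPolynomial (Fin 2) K) ^ (2 * m - (i : ℕ))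
      else if (i : ℕ) = 2 * m then (X 0 : MvPolynomial (Fin 2) K) ^ (m + b)
      else (X 1 : MvPolynomial (Fin 2) K) ^ (m + b))
    ∧ Submodule.span K (Set.range (fun i : Fin (2 * m + 2) =>
        if (i : ℕ) < m then (X 0 : MvPolynomial (Fin 2) K) ^ (i : ℕ)
        else if (i : ℕ) = m then (X 0 : MvPolynomial (Fin 2) K) ^ m - X 1 ^ m
        else if (i : ℕ) < 2 * m then (X 1 : MvPolynomial (Fin 2) K) ^ (2 * m - (i : ℕ))
        else if (i : ℕ) = 2 * m then (X 0 : MvPolynomial (Fin 2) K) ^ (m + b)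
        else (X 1 : MvPolynomial (Fin 2) K) ^ (m + b)))
      = LinearMap.ker (D2 q m) ⊓ LinearMap.ker (D2 q (2 * m)) ⊓
          LinearMap.ker ((pderiv 0).toLinearMap * (pderiv 1).toLinearMap :
            Module.End K (MvPolynomial (Fin 2) K)) := by
  subst hq
  have hb0 : b ≠ 0 := by omega
  have hm0 : m ≠ 0 := by omega
  have hself (i : Fin (2 * m + 2)) :
      lcoeff K (dualExponent m b i) (singularHarmonic K m b i) = 1 := by
    simp [coeff_dualExponent_singularHarmonic hb0 hm0]
  have hne : Pairwise fun i j ↦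
      lcoeff K (dualExponent m b i) (singularHarmonic K m b j) = 0 := fun i j hij ↦ by
    simp [coeff_dualExponent_singularHarmonic hb0 hm0, hij.symm]
  exact ⟨.of_pairwise_dual_eq_zero_one (singularHarmonic K m b) _ hne hself,
    span_range_eq_of_dual (singularHarmonic_mem_qHarmonic hb0 hbm) hne hself
      fun _ ↦ eq_zero_of_coeff_dualExponent_eq_zero hb0 hm0⟩
end
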